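/- Assume A_{∂I}ᵀA_{∂I} is invertible, so F has a unique minimizer x(y). For every partition of ∂I₀ into two disjoint sets K⁻ ∪ K⁺ = ∂I₀ with K⁻ ≠ ∅, the probability P(X_β ∈ {x ∈ ℝ^p : xᵢξᵢ ≤ 0 for all i ∈ K⁻ and xᵢξᵢ ≥ 0 for all i ∈ K⁺}), i.e. the ratio of ∫ over this set of exp(−2βF(x)) dx to Z_β = ∫_{ℝ^p} exp(−2βF(x)) dx, tends to 0 as β → +∞. -/

import Mathlib

open MeasureTheory

theorem pon_ident {p n : ℕ} (A : Matrix (Fin n) (Fin p) ℝ)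
    (y : Fin n → ℝ) (F : (Fin p → ℝ) → ℝ)
    (hF : ∀ x, F x = (∑ i, |x i|) + (∑ j, (A.mulVec x j - y j) ^ 2) / 2)
    (x₀ : Fin p → ℝ) (ξ : Fin p → ℝ) (hξ : ξ = A.transpose.mulVec (y - A.mulVec x₀))
    (h : Fin p → ℝ) :
    F (x₀ + h) - F x₀ = (∑ i, (|x₀ i + h i| - |x₀ i| - ξ i * h i))
      + (∑ j, (A.mulVec h j) ^ 2) / 2 := by
  have h1 : ∑ i, ξ i * h i = ∑ j, (y j - A.mulVec x₀ j) * A.mulVec h j := by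
    have : ξ ⬝ᵥ h = (y - A.mulVec x₀) ⬝ᵥ A.mulVec h := by
      rw [hξ, Matrix.mulVec_transpose, Matrix.dotProduct_mulVec]
    simpa [dotProduct] using this
  rw [hF, hF]
  simp only [Finset.sum_sub_distrib, h1, Matrix.mulVec_add, Pi.add_apply]
  have h2 : ∑ j, (A.mulVec x₀ j + A.mulVec h j - y j) ^ 2 =
      ∑ j, (A.mulVec x₀ j - y j) ^ 2 - 2 * ∑ j, (y j - A.mulVec x₀ j) * A.mulVec h j
      + ∑ j, (A.mulVec h j) ^ 2 := by
    rw [Finset.mul_sum, ← Finset.sum_sub_distrib, ← Finset.sum_add_distrib]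
    exact Finset.sum_congr rfl fun j _ => by ring
  rw [h2]; ring

theorem pon_subgrad {p n : ℕ} (A : Matrix (Fin n) (Fin p) ℝ)
    (y : Fin n → ℝ) (F : (Fin p → ℝ) → ℝ)
    (hF : ∀ x, F x = (∑ i, |x i|) + (∑ j, (A.mulVec x j - y j) ^ 2) / 2)
    (x₀ : Fin p → ℝ) (hx₀ : ∀ z, F x₀ ≤ F z)
    (ξ : Fin p → ℝ) (hξ : ξ = A.transpose.mulVec (y - A.mulVec x₀)) (i : Fin p) :
    |ξ i| ≤ 1 ∧ ξ i * x₀ i = |x₀ i| := by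
  obtain ⟨C, hC⟩ : ∃ C : ℝ, ∀ t : ℝ, 0 ≤ |x₀ i + t| - |x₀ i| - ξ i * t + C * t ^ 2 := by
    refine ⟨(∑ j, (A j i) ^ 2) / 2, fun t => ?_⟩
    have h := pon_ident A y F hF x₀ ξ hξ (Pi.single i t)
    have h0 := hx₀ (x₀ + Pi.single i t)
    rw [Finset.sum_eq_single i] at h
    · simp only [Pi.single_eq_same, Matrix.mulVec_single, Pi.smul_apply, Matrix.col_apply,
        MulOpposite.smul_eq_mul_unop, MulOpposite.unop_op, mul_pow, ← Finset.sum_mul] at h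
      linarith
    · intro b _ hb; simp [Pi.single_eq_of_ne hb]
    · simp
  have key : ∀ t : ℝ, 0 ≤ |x₀ i + t| - |x₀ i| - ξ i * t := by
    intro t
    have h1 : ∀ l : ℝ, 0 < l → l ≤ 1 → 0 ≤ |x₀ i + t| - |x₀ i| - ξ i * t + l * (C * t ^ 2) := by
      intro l hl hl1
      have h2 := hC (l * t)
      have h3 : |x₀ i + l * t| ≤ (1 - l) * |x₀ i| + l * |x₀ i + t| := by
        calc |x₀ i + l * t| = |(1 - l) * x₀ i + l * (x₀ i + t)| := by ring_nf
          _ ≤ _ := (abs_add_le _ _).trans (by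
            rw [abs_mul, abs_mul, abs_of_pos hl, abs_of_nonneg (by linarith : 0 ≤ 1 - l)])
      have h4 : 0 ≤ l * (|x₀ i + t| - |x₀ i| - ξ i * t + l * (C * t ^ 2)) := by nlinarith
      exact nonneg_of_mul_nonneg_right h4 hl
    have ht : Filter.Tendsto (fun l : ℝ => |x₀ i + t| - |x₀ i| - ξ i * t + l * (C * t ^ 2))
        (nhdsWithin 0 (Set.Ioi 0)) (nhds (|x₀ i + t| - |x₀ i| - ξ i * t + 0 * (C * t ^ 2))) := by
      apply Filter.Tendsto.mono_left _ nhdsWithin_le_nhds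
      exact Continuous.tendsto (by fun_prop) 0
    have := ge_of_tendsto ht (b := 0) (by
      filter_upwards [Ioc_mem_nhdsGT (zero_lt_one (α := ℝ))] with l hl
      exact h1 l hl.1 hl.2)
    linarith
  have ha : |ξ i| ≤ 1 := by
    rw [abs_le]
    have k1 := key 1
    have k2 := key (-1)
    have a1 := abs_add_le (x₀ i) 1
    have a2 := abs_add_le (x₀ i) (-1)
    norm_num at a1 a2
    constructor <;> linarith
  refine ⟨ha, le_antisymm ?_ ?_⟩
  · calc ξ i * x₀ i ≤ |ξ i * x₀ i| := le_abs_self _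
      _ = |ξ i| * |x₀ i| := abs_mul _ _
      _ ≤ _ := by nlinarith [abs_nonneg (x₀ i)]
  · have := key (-(x₀ i))
    simp at this
    linarith

theorem pon_indep {p n : ℕ} (A : Matrix (Fin n) (Fin p) ℝ) (ξ : Fin p → ℝ)
    (hind : LinearIndependent ℝ
      (fun i : {i : Fin p // |ξ i| = 1} => (fun j => A j i.1 : Fin n → ℝ))) :
    ∃ K : ℝ, 0 < K ∧ ∀ v : Fin p → ℝ, ∑ i, (if |ξ i| = 1 then |v i| else 0) ≤
      K * ∑ j, |∑ i, (if |ξ i| = 1 then A j i * v i else 0)| := by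
  classical
  have hinj := linearIndependent_iff_injective_fintypeLinearCombination.1 hind
  obtain ⟨K, hK, hL⟩ := LinearMap.exists_antilipschitzWith _ (LinearMap.ker_eq_bot.2 hinj)
  refine ⟨(p + 1) * K, by positivity, fun v => ?_⟩
  set w : Fin n → ℝ := fun j => ∑ i, (if |ξ i| = 1 then A j i * v i else 0) with hw
  have h1 := hL.le_mul_dist (fun i : {i : Fin p // |ξ i| = 1} => v i) 0
  rw [map_zero, dist_zero_right, dist_zero_right] at h1
  have h2 : Fintype.linearCombination ℝ (fun i : {i : Fin p // |ξ i| = 1} => (fun j => A j i.1 : Fin n → ℝ)) (fun i : {i : Fin p // |ξ i| = 1} => v i) = w := by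
    ext j
    simp only [Fintype.linearCombination_apply, hw, Finset.sum_apply, Pi.smul_apply, smul_eq_mul]
    rw [← Finset.sum_filter, ← Finset.sum_subtype_eq_sum_filter]
    simp [mul_comm]
    
  rw [h2] at h1
  have h3 : ‖w‖ ≤ ∑ j, |w j| := by
    rw [pi_norm_le_iff_of_nonneg (by positivity)]
    intro j
    exact Finset.single_le_sum (f := fun j => |w j|) (fun j _ => abs_nonneg _) (Finset.mem_univ j)
  have h4 : ∀ i ∈ Finset.univ, (if |ξ i| = 1 then |v i| else 0) ≤ K * ∑ j, |w j| := by
    intro i _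
    split_ifs with hi
    · exact (norm_le_pi_norm (fun i : {i : Fin p // |ξ i| = 1} => v i) ⟨i, hi⟩).trans
        (h1.trans (by gcongr))
    · positivity
  have h5 := Finset.sum_le_card_nsmul _ _ _ h4
  simp only [Finset.card_univ, Fintype.card_fin, nsmul_eq_mul] at h5
  have : 0 ≤ K * ∑ j, |w j| := by positivity
  linarith

theorem pon_gap {p : ℕ} (ξ : Fin p → ℝ) : ∃ c : ℝ, 0 < c ∧ ∀ i, |ξ i| < 1 → c ≤ 1 - |ξ i| := by
  have : ∀ᶠ c : ℝ in nhdsWithin 0 (Set.Ioi 0), ∀ i, |ξ i| < 1 → c ≤ 1 - |ξ i| := by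
    rw [Filter.eventually_all]
    intro i
    by_cases h : |ξ i| < 1
    · filter_upwards [Ioc_mem_nhdsGT (by linarith : 0 < 1 - |ξ i|)] with c hc _ using hc.2
    · exact Filter.Eventually.of_forall fun c h' => absurd h' h
  obtain ⟨c, h1, h2⟩ := (this.and self_mem_nhdsWithin).exists
  exact ⟨c, h2, h1⟩


theorem pon_lower {p n : ℕ} (A : Matrix (Fin n) (Fin p) ℝ)
    (y : Fin n → ℝ) (F : (Fin p → ℝ) → ℝ)
    (hF : ∀ x, F x = (∑ i, |x i|) + (∑ j, (A.mulVec x j - y j) ^ 2) / 2)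
    (x₀ : Fin p → ℝ) (hx₀ : ∀ z, F x₀ ≤ F z)
    (ξ : Fin p → ℝ) (hξ : ξ = A.transpose.mulVec (y - A.mulVec x₀))
    (hind : LinearIndependent ℝ
      (fun i : {i : Fin p // |ξ i| = 1} => (fun j => A j i.1 : Fin n → ℝ))) :
    ∃ ε C : ℝ, 0 < ε ∧ ∀ r : ℝ, 0 < r → r ≤ 1 → ∀ v : Fin p → ℝ,
      r ^ 2 * (ε * (∑ i, |v i|) - C) ≤
        F (x₀ + fun i => (if |ξ i| = 1 then r else r ^ 2) * v i) - F x₀ := by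
  obtain ⟨K, hK, hind⟩ := pon_indep A ξ hind
  obtain ⟨c, hc, hgap⟩ := pon_gap ξ
  have hsub := pon_subgrad A y F hF x₀ hx₀ ξ hξ
  set M : ℝ := ∑ j, ∑ i, |A j i| with hM
  have hM0 : 0 ≤ M := by positivity
  set t : ℝ := c / (2 * (M + 1)) with ht
  have ht0 : 0 < t := by positivity
  have htM : t * M ≤ c / 2 := by
    rw [ht, div_mul_eq_mul_div, div_le_div_iff₀ (by positivity) (by positivity)]
    nlinarith
  refine ⟨min (c / 2) (t / K), n * t ^ 2 / 2, by positivity, fun r hr hr1 v => ?_⟩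
  rw [pon_ident A y F hF x₀ ξ hξ]
  set q : Fin n → ℝ := fun j => ∑ i, A j i * ((if |ξ i| = 1 then 1 else r) * v i) with hq
  have hAq : ∀ j, A.mulVec (fun i => (if |ξ i| = 1 then r else r ^ 2) * v i) j = r * q j := by
    intro j
    simp only [Matrix.mulVec, dotProduct, hq, Finset.mul_sum]
    refine Finset.sum_congr rfl fun i _ => ?_
    split_ifs <;> ring
  set VI : ℝ := ∑ i, (if |ξ i| = 1 then 0 else |v i|) with hVI
  set VB : ℝ := ∑ i, (if |ξ i| = 1 then |v i| else 0) with hVB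
  have hV : ∑ i, |v i| = VI + VB := by
    rw [hVI, hVB, ← Finset.sum_add_distrib]
    refine Finset.sum_congr rfl fun i _ => ?_
    split_ifs <;> simp
  have hVI0 : 0 ≤ VI := Finset.sum_nonneg fun i _ => by split_ifs <;> positivity
  have hVB0 : 0 ≤ VB := Finset.sum_nonneg fun i _ => by split_ifs <;> positivity
  have hpen : r ^ 2 * (c * VI) ≤ ∑ i, (|x₀ i + (if |ξ i| = 1 then r else r ^ 2) * v i| - |x₀ i|
      - ξ i * ((if |ξ i| = 1 then r else r ^ 2) * v i)) := by
    rw [hVI, Finset.mul_sum, Finset.mul_sum]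
    refine Finset.sum_le_sum fun i _ => ?_
    obtain ⟨h1, h2⟩ := hsub i
    split_ifs with hi
    · have : ξ i * (x₀ i + r * v i) ≤ |x₀ i + r * v i| := by
        refine (le_abs_self _).trans ?_
        rw [abs_mul, hi, one_mul]
      linarith
    · have hlt : |ξ i| < 1 := lt_of_le_of_ne h1 hi
      have hz : x₀ i = 0 := by
        by_contra hne
        have : |ξ i| * |x₀ i| = |x₀ i| := by
          rw [← abs_mul, h2, abs_abs]
        have hp := abs_pos.2 hne
        nlinarith
      rw [hz, zero_add, abs_mul, abs_of_pos (by positivity : 0 < r ^ 2)]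
      have h3 : ξ i * v i ≤ |ξ i| * |v i| := (le_abs_self _).trans (abs_mul _ _).le
      have h4 : c * |v i| ≤ (1 - |ξ i|) * |v i| :=
        mul_le_mul_of_nonneg_right (hgap i hlt) (abs_nonneg _)
      have h5 : 0 ≤ r ^ 2 * (|v i| - ξ i * v i - c * |v i|) :=
        mul_nonneg (by positivity) (by linarith)
      simp only [abs_zero]
      linarith
  have hw : ∑ j, |∑ i, (if |ξ i| = 1 then A j i * v i else 0)| ≤ ∑ j, |q j| + M * VI := by
    rw [hM, Finset.sum_mul, ← Finset.sum_add_distrib]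
    refine Finset.sum_le_sum fun j _ => ?_
    have e1 : ∑ i, (if |ξ i| = 1 then A j i * v i else 0) =
        q j - ∑ i, (if |ξ i| = 1 then 0 else r * (A j i * v i)) := by
      rw [hq, ← Finset.sum_sub_distrib]
      refine Finset.sum_congr rfl fun i _ => ?_
      split_ifs <;> ring
    rw [e1]
    refine (abs_sub _ _).trans ?_
    gcongr
    refine (Finset.abs_sum_le_sum_abs _ _).trans ?_
    rw [Finset.sum_mul]
    refine Finset.sum_le_sum fun i _ => ?_
    have e2 : (if |ξ i| = 1 then 0 else |v i|) ≤ VI :=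
      Finset.single_le_sum (f := fun i => if |ξ i| = 1 then 0 else |v i|)
        (fun i _ => by split_ifs <;> positivity) (Finset.mem_univ i)
    split_ifs at e2 ⊢ with hi
    · simp; positivity
    · rw [abs_mul, abs_mul, abs_of_pos hr]
      calc r * (|A j i| * |v i|) ≤ 1 * (|A j i| * |v i|) := by gcongr
        _ ≤ _ := by rw [one_mul]; gcongr
  have hquad : t * ∑ j, |q j| - n * t ^ 2 / 2 ≤ (∑ j, q j ^ 2) / 2 := by
    have : ∑ j, (t * |q j| - t ^ 2 / 2) ≤ ∑ j, q j ^ 2 / 2 := by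
      refine Finset.sum_le_sum fun j _ => ?_
      nlinarith [sq_nonneg (|q j| - t), sq_abs (q j)]
    rw [Finset.sum_sub_distrib, ← Finset.mul_sum, ← Finset.sum_div, ← Finset.sum_div] at this
    simp only [Finset.sum_const, Finset.card_univ, Fintype.card_fin, nsmul_eq_mul] at this
    linarith
  have hB : t / K * VB ≤ t * (∑ j, |q j|) + t * M * VI := by
    have h1 : VB ≤ K * (∑ j, |q j| + M * VI) := (hind v).trans (by gcongr)
    calc t / K * VB ≤ t / K * (K * (∑ j, |q j| + M * VI)) := by gcongr
      _ = _ := by field_simp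
  have hsq : (∑ j, (A.mulVec (fun i => (if |ξ i| = 1 then r else r ^ 2) * v i) j) ^ 2) / 2
      = r ^ 2 * ((∑ j, q j ^ 2) / 2) := by
    simp only [hAq, mul_pow, ← Finset.mul_sum]; ring
  rw [hsq]
  have h1 : min (c / 2) (t / K) * VI ≤ c / 2 * VI := by gcongr; exact min_le_left _ _
  have h2 : min (c / 2) (t / K) * VB ≤ t / K * VB := by gcongr; exact min_le_right _ _
  have h3 : t * M * VI ≤ c / 2 * VI := by gcongr
  have h4 : 0 ≤ r ^ 2 * (c * VI + (∑ j, q j ^ 2) / 2 -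
      (min (c / 2) (t / K) * (VI + VB) - n * t ^ 2 / 2)) :=
    mul_nonneg (by positivity) (by linarith)
  rw [hV]
  linarith

theorem pon_upper {p n : ℕ} (A : Matrix (Fin n) (Fin p) ℝ)
    (y : Fin n → ℝ) (F : (Fin p → ℝ) → ℝ)
    (hF : ∀ x, F x = (∑ i, |x i|) + (∑ j, (A.mulVec x j - y j) ^ 2) / 2)
    (x₀ : Fin p → ℝ) (hx₀ : ∀ z, F x₀ ≤ F z)
    (ξ : Fin p → ℝ) (hξ : ξ = A.transpose.mulVec (y - A.mulVec x₀)) :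
    ∃ C : ℝ, ∀ r : ℝ, 0 < r → r ≤ 1 → ∀ v : Fin p → ℝ,
      (∀ i, |v i| ≤ 1 ∧ 0 ≤ ξ i * v i) →
        F (x₀ + fun i => (if |ξ i| = 1 then r else r ^ 2) * v i) - F x₀ ≤ r ^ 2 * C := by
  have hsub := pon_subgrad A y F hF x₀ hx₀ ξ hξ
  refine ⟨(∑ i : Fin p, 1) + (∑ j, (∑ i, |A j i|) ^ 2) / 2, fun r hr hr1 v hv => ?_⟩
  rw [pon_ident A y F hF x₀ ξ hξ, mul_add]
  refine add_le_add ?_ ?_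
  · rw [Finset.mul_sum]
    refine Finset.sum_le_sum fun i _ => ?_
    obtain ⟨h1, h2⟩ := hsub i
    obtain ⟨h3, h4⟩ := hv i
    split_ifs with hi
    · have e : ξ i * v i = |v i| := by rw [← abs_of_nonneg h4, abs_mul, hi, one_mul]
      have e1 : ξ i * (r * v i) = r * |v i| := by rw [← e]; ring
      have e2 := abs_add_le (x₀ i) (r * v i)
      rw [abs_mul, abs_of_pos hr] at e2
      nlinarith
    · have e2 := abs_add_le (x₀ i) (r ^ 2 * v i)
      rw [abs_mul, abs_of_pos (by positivity : 0 < r ^ 2)] at e2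
      have : 0 ≤ r ^ 2 * (ξ i * v i + (1 - |v i|)) := mul_nonneg (by positivity) (by linarith)
      linarith
  · rw [mul_div_assoc', Finset.mul_sum]
    gcongr with j
    rw [← mul_pow]
    apply sq_le_sq'
    all_goals
      have : |A.mulVec (fun i => (if |ξ i| = 1 then r else r ^ 2) * v i) j| ≤ r * ∑ i, |A j i| := by
        rw [Finset.mul_sum]
        simp only [Matrix.mulVec, dotProduct]
        refine (Finset.abs_sum_le_sum_abs _ _).trans (Finset.sum_le_sum fun i _ => ?_)
        have hd : |(if |ξ i| = 1 then r else r ^ 2)| ≤ r := by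
          split_ifs
          · rw [abs_of_pos hr]
          · rw [abs_of_pos (by positivity)]; nlinarith
        rw [abs_mul, abs_mul, mul_comm r]
        gcongr
        calc _ ≤ r * 1 := by gcongr; exact (hv i).1
          _ = r := mul_one r
      have := abs_le.1 this
      linarith [this.1, this.2]

theorem pon_cov {p : ℕ} (d : Fin p → ℝ) (hd : ∀ i, 0 < d i) (x₀ : Fin p → ℝ)
    (g : (Fin p → ℝ) → ℝ) (hg : Measurable g) :
    ∫ x, g x = (∏ i, d i) * ∫ v : Fin p → ℝ, g (x₀ + fun i => d i * v i) := by
  classical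
  have hdet : (Matrix.diagonal d).det = ∏ i, d i := Matrix.det_diagonal
  have hpos : 0 < ∏ i, d i := Finset.prod_pos fun i _ => hd i
  have h := Real.smul_map_diagonal_volume_pi (D := d) (by rw [hdet]; exact hpos.ne')
  rw [← integral_add_left_eq_self g x₀]
  conv_lhs => rw [← h]
  rw [integral_smul_measure, hdet, abs_of_pos hpos, ENNReal.toReal_ofReal hpos.le, smul_eq_mul,
    integral_map]
  · congr 2
    ext v
    congr 2
    ext i
    simp [Matrix.mulVec_diagonal]
  · exact (LinearMap.continuous_of_finiteDimensional _).measurable.aemeasurable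
  · exact (hg.comp (measurable_const_add x₀)).aestronglyMeasurable

theorem pon_integrable {p : ℕ} (ε C : ℝ) (hε : 0 < ε) :
    Integrable (fun v : Fin p → ℝ => Real.exp (-2 * (ε * (∑ i, |v i|) - C))) := by
  have h1 : Integrable (fun x : ℝ => Real.exp (-2 * ε * |x|)) := by
    have h0 := integrable_inv_one_add_sq.comp_mul_left' hε.ne'
    refine h0.mono' (by fun_prop) (Filter.Eventually.of_forall fun x => ?_)
    rw [Real.norm_eq_abs, abs_of_pos (Real.exp_pos _),
      show -2 * ε * |x| = -(ε * |x| + ε * |x|) by ring, Real.exp_neg, Real.exp_add]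
    have hu : 0 ≤ ε * |x| := by positivity
    have he := Real.add_one_le_exp (ε * |x|)
    gcongr
    have : (ε * x) ^ 2 = (ε * |x|) ^ 2 := by rw [mul_pow, mul_pow, sq_abs]
    rw [this]
    nlinarith
  have h2 := (Integrable.fintype_prod (ι := Fin p) (f := fun _ x => Real.exp (-2 * ε * |x|))
    (μ := fun _ => volume) (fun _ => h1)).const_mul (Real.exp (2 * C))
  refine h2.congr (Filter.Eventually.of_forall fun v => ?_)
  simp only
  rw [← Real.exp_sum, ← Real.exp_add, ← Finset.mul_sum]
  congr 1; ring

/-- Under invertibility of `A_{∂I}ᵀA_{∂I}`, for any partition `K⁻ ∪ K⁺ = ∂I₀` with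
`K⁻ ≠ ∅`, the posterior probability of the orthant-type set
`{x : xᵢξᵢ ≤ 0 on K⁻, xᵢξᵢ ≥ 0 on K⁺}` tends to `0` as `β → +∞`. -/
theorem posterior_orthant_negligible (p n : ℕ) (A : Matrix (Fin n) (Fin p) ℝ)
    (y : Fin n → ℝ) (F : (Fin p → ℝ) → ℝ)
    (hF : ∀ x, F x = (∑ i, |x i|) + (∑ j, (A.mulVec x j - y j) ^ 2) / 2)
    (x₀ : Fin p → ℝ) (hx₀ : ∀ z, F x₀ ≤ F z)
    (ξ : Fin p → ℝ) (hξ : ξ = A.transpose.mulVec (y - A.mulVec x₀))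
    (hind : LinearIndependent ℝ
      (fun i : {i : Fin p // |ξ i| = 1} => (fun j => A j i.1 : Fin n → ℝ)))
    (Kneg Kpos : Set (Fin p)) (hdisj : Disjoint Kneg Kpos)
    (hunion : Kneg ∪ Kpos = {i | x₀ i = 0 ∧ |ξ i| = 1})
    (hne : Kneg.Nonempty) :
    Filter.Tendsto (fun β : ℝ =>
        (∫ x in {x : Fin p → ℝ |
            (∀ i ∈ Kneg, x i * ξ i ≤ 0) ∧ (∀ i ∈ Kpos, 0 ≤ x i * ξ i)},
          Real.exp (-2 * β * F x)) /
        (∫ x : Fin p → ℝ, Real.exp (-2 * β * F x)))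
      Filter.atTop (nhds 0) := by
  classical
  obtain ⟨k, hk⟩ := hne
  have hsub := pon_subgrad A y F hF x₀ hx₀ ξ hξ
  obtain ⟨ε, C₁, hε, hlow⟩ := pon_lower A y F hF x₀ hx₀ ξ hξ hind
  obtain ⟨C₂, hup⟩ := pon_upper A y F hF x₀ hx₀ ξ hξ
  have hkm : x₀ k = 0 ∧ |ξ k| = 1 := by
    have : k ∈ Kneg ∪ Kpos := Or.inl hk
    rw [hunion] at this
    exact this
  set E : Set (Fin p → ℝ) := {x : Fin p → ℝ |
            (∀ i ∈ Kneg, x i * ξ i ≤ 0) ∧ (∀ i ∈ Kpos, 0 ≤ x i * ξ i)} with hE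
  have hEm : MeasurableSet E := by
    apply IsClosed.measurableSet
    have : E = (⋂ i ∈ Kneg, {x : Fin p → ℝ | x i * ξ i ≤ 0}) ∩
        (⋂ i ∈ Kpos, {x : Fin p → ℝ | 0 ≤ x i * ξ i}) := by
      ext x; simp [hE]
    rw [this]
    apply IsClosed.inter
    · exact isClosed_biInter fun i _ => isClosed_le (by fun_prop) (by fun_prop)
    · exact isClosed_biInter fun i _ => isClosed_le (by fun_prop) (by fun_prop)
  have hFc : Continuous F := by
    have : F = fun x => (∑ i, |x i|) + (∑ j, ((∑ i, A j i * x i) - y j) ^ 2) / 2 := by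
      ext x; rw [hF]; rfl
    rw [this]; fun_prop
  -- the scaling
  set r : ℝ → ℝ := fun β => (Real.sqrt β)⁻¹ with hr
  set T : ℝ → (Fin p → ℝ) → (Fin p → ℝ) :=
    fun β v => x₀ + fun i => (if |ξ i| = 1 then r β else r β ^ 2) * v i with hT
  have hTc : ∀ β, Continuous (T β) := fun β => by
    simp only [hT]; fun_prop
  set G : ℝ → (Fin p → ℝ) → ℝ := fun β v => Real.exp (-2 * (β * (F (T β v) - F x₀))) with hG
  have hGc : ∀ β, Continuous (G β) := fun β => by
    have := hFc.comp (hTc β)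
    simp only [Function.comp_def] at this
    simp only [hG]; fun_prop
  have hr0 : ∀ β : ℝ, 1 ≤ β → 0 < r β ∧ r β ≤ 1 ∧ β * r β ^ 2 = 1 := by
    intro β hβ
    refine ⟨by positivity, inv_le_one_of_one_le₀ (Real.one_le_sqrt.2 hβ), ?_⟩
    simp only [hr, inv_pow]
    rw [Real.sq_sqrt (by linarith)]
    exact mul_inv_cancel₀ (by linarith)
  have hscale : ∀ β : ℝ, 1 ≤ β → ∀ a b : ℝ, r β ^ 2 * a ≤ b → a ≤ β * b := by
    intro β hβ a b h
    have h3 := (hr0 β hβ).2.2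
    calc a = β * (r β ^ 2 * a) := by rw [← mul_assoc, h3, one_mul]
      _ ≤ _ := by gcongr
  have hscale' : ∀ β : ℝ, 1 ≤ β → ∀ a b : ℝ, b ≤ r β ^ 2 * a → β * b ≤ a := by
    intro β hβ a b h
    have h3 := (hr0 β hβ).2.2
    calc β * b ≤ β * (r β ^ 2 * a) := by gcongr
      _ = a := by rw [← mul_assoc, h3, one_mul]
  have hGb : ∀ β : ℝ, 1 ≤ β → ∀ v, G β v ≤ Real.exp (-2 * (ε * (∑ i, |v i|) - C₁)) := by
    intro β hβ v
    obtain ⟨h1, h2, h3⟩ := hr0 β hβ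
    have h4 := hscale β hβ _ _ (hlow (r β) h1 h2 v)
    apply Real.exp_le_exp.2
    simp only [hT]
    linarith
  have hbdi := pon_integrable (p := p) ε C₁ hε
  have hGi : ∀ β : ℝ, 1 ≤ β → Integrable (G β) := fun β hβ =>
    hbdi.mono' (hGc β).aestronglyMeasurable (Filter.Eventually.of_forall fun v => by
      rw [Real.norm_eq_abs, abs_of_pos (Real.exp_pos _)]; exact hGb β hβ v)
  -- numerator
  have hN : Filter.Tendsto (fun β => ∫ v, (T β ⁻¹' E).indicator (G β) v) Filter.atTop
      (nhds 0) := by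
    have : (0 : ℝ) = ∫ v : Fin p → ℝ, (0 : ℝ) := by simp
    rw [this]
    refine tendsto_integral_filter_of_dominated_convergence
      (fun v => Real.exp (-2 * (ε * (∑ i, |v i|) - C₁))) ?_ ?_ hbdi ?_
    · exact Filter.Eventually.of_forall fun β =>
        ((hGc β).measurable.indicator ((hTc β).measurable hEm)).aestronglyMeasurable
    · filter_upwards [Filter.eventually_ge_atTop (1 : ℝ)] with β hβ
      refine Filter.Eventually.of_forall fun v => ?_
      rw [Real.norm_eq_abs, abs_of_nonneg (Set.indicator_nonneg (fun _ _ => (Real.exp_pos _).le) _)]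
      refine (Set.indicator_le_self' (fun _ _ => (Real.exp_pos _).le) v).trans (hGb β hβ v)
    · have hae : ∀ᵐ v : Fin p → ℝ, v k ≠ 0 := by
        rw [ae_iff]
        simp only [not_not]
        exact Measure.pi_hyperplane (fun _ : Fin p => (volume : Measure ℝ)) k 0
      filter_upwards [hae] with v hv
      have hlim : Filter.Tendsto (fun β : ℝ => Real.exp (-(Real.sqrt β * (4 * |v k|))))
          Filter.atTop (nhds 0) := by
        refine Real.tendsto_exp_neg_atTop_nhds_zero.comp ?_
        exact Real.tendsto_sqrt_atTop.atTop_mul_const (by positivity)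
      refine squeeze_zero' (Filter.Eventually.of_forall fun β =>
        Set.indicator_nonneg (fun _ _ => (Real.exp_pos _).le) _) ?_ hlim
      filter_upwards [Filter.eventually_ge_atTop (1 : ℝ)] with β hβ
      refine Set.indicator_le' (f := G β) (g := fun v => Real.exp (-(Real.sqrt β * (4 * |v k|))))
        (s := T β ⁻¹' E) ?_ (fun _ _ => (Real.exp_pos _).le) v
      intro v hvE
      apply Real.exp_le_exp.2
      obtain ⟨h1, h2, h3⟩ := hr0 β hβ
      have hE1 : T β v k * ξ k ≤ 0 := hvE.1 k hk
      simp only [hT, Pi.add_apply, hkm.1, hkm.2, if_true, zero_add] at hE1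
      have hF1 : 2 * (r β * |v k|) ≤ F (T β v) - F x₀ := by
        simp only [hT]
        rw [pon_ident A y F hF x₀ ξ hξ]
        set h : Fin p → ℝ := fun i => (if |ξ i| = 1 then r β else r β ^ 2) * v i with hh
        have hhk : h k = r β * v k := by simp [hh, hkm.2]
        have hterm : 2 * (r β * |v k|) ≤ |x₀ k + h k| - |x₀ k| - ξ k * h k := by
          rw [hkm.1, zero_add, abs_zero, hhk]
          have e1 : ξ k * (r β * v k) = - (r β * |v k|) := by
            have : |ξ k * (r β * v k)| = r β * |v k| := by
              rw [abs_mul, hkm.2, one_mul, abs_mul, abs_of_pos h1]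
            rw [abs_of_nonpos (by linarith)] at this
            linarith
          rw [e1, abs_mul, abs_of_pos h1]
          linarith
        have hsum : |x₀ k + h k| - |x₀ k| - ξ k * h k ≤
            ∑ i, (|x₀ i + h i| - |x₀ i| - ξ i * h i) := by
          refine Finset.single_le_sum (f := fun i => |x₀ i + h i| - |x₀ i| - ξ i * h i)
            (fun i _ => ?_) (Finset.mem_univ k)
          have : ξ i * (x₀ i + h i) ≤ |x₀ i + h i| := by
            refine (le_abs_self _).trans ?_
            rw [abs_mul]
            nlinarith [abs_nonneg (x₀ i + h i), (hsub i).1]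
          have := (hsub i).2
          linarith
        have : 0 ≤ (∑ j, (A.mulVec h j) ^ 2) / 2 := by positivity
        linarith
      have hβr : β * r β = Real.sqrt β := by
        simp only [hr]
        rw [← div_eq_mul_inv, Real.div_sqrt]
      have : β * (2 * (r β * |v k|)) ≤ β * (F (T β v) - F x₀) := by gcongr
      have e : β * (2 * (r β * |v k|)) = Real.sqrt β * (2 * |v k|) := by rw [← hβr]; ring
      linarith
  -- denominator
  set ctr : Fin p → ℝ := fun i => if 0 ≤ ξ i then 1 / 2 else -1 / 2 with hctr
  set B : Set (Fin p → ℝ) := Metric.ball ctr (1 / 2) with hB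
  set m : ℝ := volume.real B * Real.exp (-2 * C₂) with hm
  have hm0 : 0 < m := by
    have : 0 < volume.real B :=
      ENNReal.toReal_pos (Metric.measure_ball_pos _ _ (by norm_num)).ne' measure_ball_lt_top.ne
    positivity
  have hD : ∀ β : ℝ, 1 ≤ β → m ≤ ∫ v, G β v := by
    intro β hβ
    obtain ⟨h1, h2, h3⟩ := hr0 β hβ
    calc m = ∫ v in B, Real.exp (-2 * C₂) := by
          rw [setIntegral_const, smul_eq_mul]
      _ ≤ ∫ v in B, G β v := by
          refine setIntegral_mono_on (integrableOn_const measure_ball_lt_top.ne)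
            (hGi β hβ).integrableOn measurableSet_ball fun v hv => ?_
          apply Real.exp_le_exp.2
          have hv' : ∀ i, |v i| ≤ 1 ∧ 0 ≤ ξ i * v i := by
            intro i
            have h5 : |v i - ctr i| < 1 / 2 := by
              have := (dist_le_pi_dist v ctr i).trans_lt (Metric.mem_ball.1 hv)
              rwa [Real.dist_eq] at this
            rw [abs_lt] at h5
            simp only [hctr] at h5
            split_ifs at h5 with hi
            · exact ⟨abs_le.2 ⟨by linarith, by linarith⟩, mul_nonneg hi (by linarith)⟩
            · exact ⟨abs_le.2 ⟨by linarith, by linarith⟩,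
                mul_nonneg_of_nonpos_of_nonpos (by linarith) (by linarith)⟩
          have := hscale' β hβ _ _ (hup (r β) h1 h2 v hv')
          simp only [hT]
          linarith
      _ ≤ _ := setIntegral_le_integral (hGi β hβ)
          (Filter.Eventually.of_forall fun _ => (Real.exp_pos _).le)
  -- ratio
  have hratio : ∀ β : ℝ, 1 ≤ β →
      (∫ x in E, Real.exp (-2 * β * F x)) / (∫ x : Fin p → ℝ, Real.exp (-2 * β * F x)) =
      (∫ v, (T β ⁻¹' E).indicator (G β) v) / ∫ v, G β v := by
    intro β hβ
    obtain ⟨h1, h2, h3⟩ := hr0 β hβ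
    have hd : ∀ i, 0 < (if |ξ i| = 1 then r β else r β ^ 2) := fun i => by
      split_ifs <;> positivity
    have hgm : Measurable (fun x => Real.exp (-2 * β * F x)) :=
      (by fun_prop : Continuous (fun x => Real.exp (-2 * β * F x))).measurable
    have hexp : ∀ v, Real.exp (-2 * β * F (T β v)) = Real.exp (-2 * β * F x₀) * G β v := by
      intro v
      simp only [hG]
      rw [← Real.exp_add]
      congr 1; ring
    rw [← integral_indicator hEm, pon_cov _ hd x₀ _ (hgm.indicator hEm), pon_cov _ hd x₀ _ hgm]
    have e1 : ∫ v, E.indicator (fun x => Real.exp (-2 * β * F x)) (T β v) =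
        Real.exp (-2 * β * F x₀) * ∫ v, (T β ⁻¹' E).indicator (G β) v := by
      rw [← integral_const_mul]
      congr 1
      ext v
      by_cases hv : T β v ∈ E
      · rw [Set.indicator_of_mem hv, Set.indicator_of_mem (show v ∈ T β ⁻¹' E from hv), hexp]
      · rw [Set.indicator_of_notMem hv, Set.indicator_of_notMem (show v ∉ T β ⁻¹' E from hv),
          mul_zero]
    have e2 : ∫ v, Real.exp (-2 * β * F (T β v)) =
        Real.exp (-2 * β * F x₀) * ∫ v, G β v := by
      rw [← integral_const_mul]
      congr 1
      ext v
      exact hexp v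
    have hP : (∏ i, (if |ξ i| = 1 then r β else r β ^ 2)) ≠ 0 :=
      (Finset.prod_pos fun i _ => hd i).ne'
    have := Real.exp_pos (-2 * β * F x₀)
    simp only [hT] at e1 e2 ⊢
    rw [e1, e2, mul_div_mul_left _ _ hP, mul_div_mul_left _ _ this.ne']
  have hlim := hN.div_const m
  rw [zero_div] at hlim
  refine squeeze_zero' (Filter.Eventually.of_forall fun β => ?_) ?_ hlim
  · exact div_nonneg (integral_nonneg fun _ => (Real.exp_pos _).le)
      (integral_nonneg fun _ => (Real.exp_pos _).le)
  · filter_upwards [Filter.eventually_ge_atTop (1 : ℝ)] with β hβ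
    rw [hratio β hβ]
    refine div_le_div_of_nonneg_left ?_ hm0 (hD β hβ)
    exact integral_nonneg fun v => Set.indicator_nonneg (fun _ _ => (Real.exp_pos _).le) _
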